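/- arXiv:2104.06566 — 4 statements merged into one kernel-verified Lean document; each statement's English description precedes it below -/
import Mathlib

section
/- Let v₀ > 0 and define V : [0,T] → ℝ by V(s) := μ(s) · (1/v₀ + ∫₀^{s} μ(t)·σ_b(t) dt)⁻¹. Then V is differentiable on [0,T], V(0) = v₀, and V'(s) = −σ_a(s)·V(s) − σ_b(s)·V(s)² for every s ∈ [0,T]; that is, V solves the scattering-free two-photon Riccati equation with initial value v₀, so the initial value problem has a global solution on [0,T]. -/
/-!
The Riccati equation is of Bernoulli type: for `v > 0`, the function `w = 1 / v` solves the linear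
equation `w' = σa w + σb`, and `w μ` is therefore an antiderivative of `μ σb`. Hence
`V = μ / D` with `D s = 1 / v0 + ∫₀ˢ μ σb`. The fundamental theorem of calculus
(`hasDerivWithinAt_integral_Icc`) gives `μ' = -σa μ` and `D' = μ σb` within `[0,T]`, and
`D ≥ 1 / v0 > 0` because `μ` and `σb` are nonnegative, so the quotient rule yields
`V' = -σa μ / D - σb (μ / D)²`.
-/

open Set

/-- `v` solves the scattering-free two-photon Riccati equation
`v' = -σa v - σb v²` on `[0,T]` with initial value `v₀`
(derivative taken within `[0,T]`, i.e. one-sided at the endpoints). -/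
def SolvesRiccati (σa σb : ℝ → ℝ) (T : ℝ) (v : ℝ → ℝ) (v0 : ℝ) : Prop :=
  (∀ s ∈ Set.Icc (0 : ℝ) T,
      HasDerivWithinAt v (-(σa s * v s) - σb s * (v s) ^ 2) (Set.Icc 0 T) s) ∧
    v 0 = v0

/-- The fundamental theorem of calculus for an integrand that is continuous only on `[0,T]`, with
the derivative one-sided at the endpoints. -/
lemma hasDerivWithinAt_integral_Icc {T : ℝ} {f : ℝ → ℝ} (hf : ContinuousOn f (Set.Icc 0 T))
    {s : ℝ} (hs : s ∈ Set.Icc 0 T) :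
    HasDerivWithinAt (fun x => ∫ t in (0 : ℝ)..x, f t) (f s) (Set.Icc 0 T) s := by
  -- the `Fact` lets instance search use the filter `𝓝[Icc 0 T] s` in the one-sided theorem
  have : Fact (s ∈ Set.Icc 0 T) := ⟨hs⟩
  refine intervalIntegral.integral_hasDerivWithinAt_right ?_ ?_ (hf s hs)
  · refine ContinuousOn.intervalIntegrable_of_Icc hs.1 (hf.mono ?_)
    exact Set.Icc_subset_Icc_right hs.2
  · exact hf.stronglyMeasurableAtFilter_nhdsWithin measurableSet_Icc s

theorem stmt2 (T : ℝ) (hT : 0 < T)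
    (σa σb : ℝ → ℝ)
    (hσa_cont : ContinuousOn σa (Set.Icc 0 T))
    (hσb_cont : ContinuousOn σb (Set.Icc 0 T))
    (hσa_nonneg : ∀ t ∈ Set.Icc (0 : ℝ) T, 0 ≤ σa t)
    (hσb_nonneg : ∀ t ∈ Set.Icc (0 : ℝ) T, 0 ≤ σb t)
    (μ : ℝ → ℝ) (hμ : ∀ t, μ t = Real.exp (-∫ r in (0 : ℝ)..t, σa r))
    (v0 : ℝ) (hv0 : 0 < v0)
    (V : ℝ → ℝ)
    (hV : ∀ s, V s = μ s * (1 / v0 + ∫ t in (0 : ℝ)..s, μ t * σb t)⁻¹) :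
    SolvesRiccati σa σb T V v0 := by
  have hμ_deriv : ∀ s ∈ Set.Icc (0 : ℝ) T,
      HasDerivWithinAt μ (μ s * -σa s) (Set.Icc 0 T) s := by
    intro s hs
    have h := (hasDerivWithinAt_integral_Icc hσa_cont hs).neg.exp
    rw [funext hμ]
    exact h
  have hμ_cont : ContinuousOn μ (Set.Icc 0 T) := fun s hs =>
    (hμ_deriv s hs).continuousWithinAt
  have hμ_pos : ∀ t, 0 < μ t := fun t => by
    rw [hμ]
    exact Real.exp_pos _
  constructor
  · intro s hs
    have hD : HasDerivWithinAt (fun x => 1 / v0 + ∫ t in (0 : ℝ)..x, μ t * σb t)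
        (μ s * σb s) (Set.Icc 0 T) s :=
      (hasDerivWithinAt_integral_Icc (hμ_cont.mul hσb_cont) hs).const_add (1 / v0)
    have hint : 0 ≤ ∫ t in (0 : ℝ)..s, μ t * σb t :=
      intervalIntegral.integral_nonneg hs.1 fun t ht =>
        mul_nonneg (hμ_pos t).le (hσb_nonneg t ⟨ht.1, ht.2.trans hs.2⟩)
    have hD_pos : 0 < 1 / v0 + ∫ t in (0 : ℝ)..s, μ t * σb t := by positivity
    rw [hV s, funext hV]
    refine ((hμ_deriv s hs).mul (hD.fun_inv hD_pos.ne')).congr_deriv ?_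
    generalize (1 / v0 + ∫ t in (0 : ℝ)..s, μ t * σb t) = D at hD_pos ⊢
    field_simp
    ring
  · rw [hV, hμ]
    simp
end

section
/- Let c₁ > c₂ > 0 and let v₁, v₂ : [0,T] → ℝ solve the scattering-free two-photon Riccati equation with initial values c₁ and c₂ respectively. Then for every s ∈ [0,T], μ(s) = (1/v₁(s) − 1/v₂(s))⁻¹ · (1/c₁ − 1/c₂). In particular, measurements of two solutions with distinct positive initial data determine the attenuation μ(s) = exp(−∫₀^{s} σ_a), i.e., the X-ray transform of σ_a along the line, without any smallness assumption on the sources. -/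
/-! The reciprocal of a positive solution satisfies the affine equation `(1/v)' = σa (1/v) + σb`,
so the difference `q = 1/v₁ - 1/v₂` of two reciprocals satisfies `q' = σa q`, from which `σb` has
disappeared. Hence `q s = q 0 * exp (∫₀ˢ σa) = q 0 / μ s`, and `q 0 ≠ 0` because `c₁ ≠ c₂`.

Solutions with positive initial value stay positive because the Riccati equation reads
`v' = -(σa + σb v) v`, a linear equation with continuous coefficient `σa + σb v`. Both this and the
equation for `q` are solved by the integrating factor in `eq_exp_of_linear`. -/

open Set

/-- A solution of `w' = k w` on `[0,T]` with continuous `k` is `w 0 * exp (∫₀ˢ k)`. -/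
lemma eq_exp_of_linear {T : ℝ} {k w : ℝ → ℝ} (hk : ContinuousOn k (Set.Icc 0 T))
    (hw : ∀ s ∈ Set.Icc (0 : ℝ) T, HasDerivWithinAt w (k s * w s) (Set.Icc 0 T) s) :
    ∀ s ∈ Set.Icc (0 : ℝ) T, w s = w 0 * Real.exp (∫ r in (0 : ℝ)..s, k r) := by
  intro s hs
  have hT : (0 : ℝ) ≤ T := hs.1.trans hs.2
  -- Extending `k` continuously to `ℝ` makes its primitive differentiable at the endpoints too.
  set K : ℝ → ℝ := Set.IccExtend hT ((Set.Icc 0 T).domRestrict k) with hK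
  have hKc : Continuous K := hk.domRestrict.Icc_extend'
  have hKk : ∀ r ∈ Set.Icc (0 : ℝ) T, K r = k r := fun r hr => by
    rw [hK, Set.IccExtend_of_mem hT _ hr]; rfl
  have hint : ∫ r in (0 : ℝ)..s, k r = ∫ r in (0 : ℝ)..s, K r := by
    refine intervalIntegral.integral_congr fun r hr => ?_
    rw [Set.uIcc_of_le hs.1] at hr
    exact (hKk r ⟨hr.1, hr.2.trans hs.2⟩).symm
  have hd : ∀ r ∈ Set.Icc (0 : ℝ) T,
      HasDerivWithinAt (fun t => w t * Real.exp (-∫ x in (0 : ℝ)..t, K x)) 0 (Set.Icc 0 T) r := by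
    intro r hr
    have h1 : HasDerivAt (fun t => ∫ x in (0 : ℝ)..t, K x) (K r) r :=
      hKc.integral_hasStrictDerivAt 0 r |>.hasDerivAt
    refine ((hw r hr).mul h1.neg.exp.hasDerivWithinAt).congr_deriv ?_
    rw [hKk r hr]
    ring
  have hconst := (convex_Icc (0 : ℝ) T).norm_image_sub_le_of_norm_hasDerivWithin_le (C := 0) hd
    (fun r _ => by simp) (Set.left_mem_Icc.2 hT) hs
  have h2 : w s * Real.exp (-∫ x in (0 : ℝ)..s, K x) = w 0 := by
    simpa [sub_eq_zero] using hconst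
  rw [hint, ← h2, mul_assoc, ← Real.exp_add]
  simp

lemma SolvesRiccati.pos {T : ℝ} {σa σb v : ℝ → ℝ} {c : ℝ}
    (ha : ContinuousOn σa (Set.Icc 0 T)) (hb : ContinuousOn σb (Set.Icc 0 T)) (hc : 0 < c)
    (hv : SolvesRiccati σa σb T v c) : ∀ s ∈ Set.Icc (0 : ℝ) T, 0 < v s := by
  intro s hs
  have hvc : ContinuousOn v (Set.Icc 0 T) := fun r hr => (hv.1 r hr).continuousWithinAt
  rw [eq_exp_of_linear (k := fun r => -(σa r + σb r * v r)) (ha.add (hb.mul hvc)).neg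
    (fun r hr => (hv.1 r hr).congr_deriv (by ring)) s hs, hv.2]
  positivity

theorem stmt11
    (T : ℝ) (hT : 0 < T)
    (σa σb : ℝ → ℝ)
    (hσa_cont : ContinuousOn σa (Set.Icc 0 T))
    (hσb_cont : ContinuousOn σb (Set.Icc 0 T))
    (hσa_nonneg : ∀ t ∈ Set.Icc (0 : ℝ) T, 0 ≤ σa t)
    (hσb_nonneg : ∀ t ∈ Set.Icc (0 : ℝ) T, 0 ≤ σb t)
    (μ : ℝ → ℝ) (hμ : ∀ t, μ t = Real.exp (-∫ r in (0 : ℝ)..t, σa r))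
    (c1 c2 : ℝ) (hc2 : 0 < c2) (hc12 : c2 < c1)
    (v1 v2 : ℝ → ℝ)
    (hv1 : SolvesRiccati σa σb T v1 c1) (hv2 : SolvesRiccati σa σb T v2 c2) :
    ∀ s ∈ Set.Icc (0 : ℝ) T,
      μ s = (1 / v1 s - 1 / v2 s)⁻¹ * (1 / c1 - 1 / c2) := by
  intro s hs
  have p1 := hv1.pos hσa_cont hσb_cont (hc2.trans hc12)
  have p2 := hv2.pos hσa_cont hσb_cont hc2
  have hq := eq_exp_of_linear (k := σa) (w := fun r => (v1 r)⁻¹ - (v2 r)⁻¹) hσa_cont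
    (fun r hr => by
      have n1 := (p1 r hr).ne'
      have n2 := (p2 r hr).ne'
      refine (((hv1.1 r hr).fun_inv n1).sub ((hv2.1 r hr).fun_inv n2)).congr_deriv ?_
      field_simp
      ring) s hs
  simp only [hv1.2, hv2.2] at hq
  have h0 : c1⁻¹ - c2⁻¹ ≠ 0 := fun h => hc12.ne' (inv_injective (sub_eq_zero.1 h))
  rw [hμ, one_div, one_div, one_div, one_div, hq, Real.exp_neg, mul_inv,
    mul_right_comm, inv_mul_cancel₀ h0, one_mul]
end

section
/- Let v₀ > 0 and let v : [0,T] → ℝ solve the scattering-free two-photon Riccati equation with initial value v₀. Then v(T) > 0 and ∫₀^{T} μ(t)·σ_b(t) dt = μ(T)/v(T) − 1/v₀; that is, the exit value v(T) together with v₀ and the attenuation μ determines the attenuated X-ray transform of σ_b along the line. -/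
/-!
The Riccati equation is linear along the solution itself: `v' = -(σa + σb v) v`. Hence
`v · exp (∫ (σa + σb v))` is constant, equal to `v0`, and `v` stays positive on `[0,T]`
(`SolvesRiccati.pos`). This makes the Bernoulli substitution `w = μ / v` legitimate. It turns the
equation into `w' = μ σb`, with `w 0 = 1 / v0`, and integrating over `[0,T]` gives the formula.
-/

open Set

/-- The fundamental theorem of calculus within `[0,T]`, one-sided at the endpoints, for an integrand
that is only controlled on `[0,T]`. -/
lemma hasDerivWithinAt_primitive {T : ℝ} {f : ℝ → ℝ} (hf : ContinuousOn f (Set.Icc 0 T))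
    {s : ℝ} (hs : s ∈ Set.Icc (0 : ℝ) T) :
    HasDerivWithinAt (fun t => ∫ r in (0 : ℝ)..t, f r) (f s) (Set.Icc 0 T) s := by
  have : Fact (s ∈ Set.Icc (0 : ℝ) T) := ⟨hs⟩
  refine intervalIntegral.integral_hasDerivWithinAt_right ?_
    (hf.stronglyMeasurableAtFilter_nhdsWithin measurableSet_Icc s) (hf s hs)
  refine ContinuousOn.intervalIntegrable (hf.mono ?_)
  rw [Set.uIcc_of_le hs.1]
  exact Set.Icc_subset_Icc_right hs.2

lemma SolvesRiccati.pos_s12 {σa σb v : ℝ → ℝ} {T v0 : ℝ}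
    (hσa : ContinuousOn σa (Set.Icc 0 T)) (hσb : ContinuousOn σb (Set.Icc 0 T))
    (hv : SolvesRiccati σa σb T v v0) (hv0 : 0 < v0) {s : ℝ} (hs : s ∈ Set.Icc (0 : ℝ) T) :
    0 < v s := by
  obtain ⟨hd, h0⟩ := hv
  have hvc : ContinuousOn v (Set.Icc 0 T) := fun t ht => (hd t ht).continuousWithinAt
  have hc : ContinuousOn (fun r => σa r + σb r * v r) (Set.Icc 0 T) := hσa.add (hσb.mul hvc)
  have hder : ∀ t ∈ Set.Icc (0 : ℝ) T, HasDerivWithinAt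
      (fun t => v t * Real.exp (∫ r in (0 : ℝ)..t, (σa r + σb r * v r))) 0 (Set.Icc 0 T) t := by
    intro t ht
    refine ((hd t ht).mul (hasDerivWithinAt_primitive hc ht).exp).congr_deriv ?_
    ring
  have hconst := constant_of_derivWithin_zero
    (fun t ht => (hder t ht).differentiableWithinAt)
    (fun t ht => (hder t (Set.Ico_subset_Icc_self ht)).derivWithin
      (uniqueDiffOn_Icc (ht.1.trans_lt ht.2) t (Set.Ico_subset_Icc_self ht))) s hs
  simp only [intervalIntegral.integral_same, Real.exp_zero, mul_one, h0] at hconst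
  exact pos_of_mul_pos_left (hconst ▸ hv0) (Real.exp_pos _).le

theorem stmt12
    (T : ℝ) (hT : 0 < T)
    (σa σb : ℝ → ℝ)
    (hσa_cont : ContinuousOn σa (Set.Icc 0 T))
    (hσb_cont : ContinuousOn σb (Set.Icc 0 T))
    (hσa_nonneg : ∀ t ∈ Set.Icc (0 : ℝ) T, 0 ≤ σa t)
    (hσb_nonneg : ∀ t ∈ Set.Icc (0 : ℝ) T, 0 ≤ σb t)
    (μ : ℝ → ℝ) (hμ : ∀ t, μ t = Real.exp (-∫ r in (0 : ℝ)..t, σa r))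
    (v0 : ℝ) (hv0 : 0 < v0)
    (v : ℝ → ℝ) (hv : SolvesRiccati σa σb T v v0) :
    0 < v T ∧
    (∫ t in (0 : ℝ)..T, μ t * σb t) = μ T / v T - 1 / v0 := by
  have hpos : ∀ s ∈ Set.Icc (0 : ℝ) T, 0 < v s := fun s hs => hv.pos_s12 hσa_cont hσb_cont hv0 hs
  refine ⟨hpos T (Set.right_mem_Icc.2 hT.le), ?_⟩
  obtain ⟨hd, h0⟩ := hv
  have hμd : ∀ s ∈ Set.Icc (0 : ℝ) T, HasDerivWithinAt μ (μ s * -σa s) (Set.Icc 0 T) s := by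
    intro s hs
    rw [hμ s, funext hμ]
    exact (hasDerivWithinAt_primitive hσa_cont hs).neg.exp
  have hμc : ContinuousOn μ (Set.Icc 0 T) := fun s hs => (hμd s hs).continuousWithinAt
  have hw : ∀ s ∈ Set.Icc (0 : ℝ) T,
      HasDerivWithinAt (fun t => μ t / v t) (μ s * σb s) (Set.Icc 0 T) s := by
    intro s hs
    have hne := (hpos s hs).ne'
    refine ((hμd s hs).div (hd s hs) hne).congr_deriv ?_
    field_simp
    ring
  have hftc := intervalIntegral.integral_eq_sub_of_hasDerivAt_of_le hT.le
    (fun s hs => (hw s hs).continuousWithinAt)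
    (fun s hs => (hw s (Set.Ioo_subset_Icc_self hs)).hasDerivAt (Icc_mem_nhds hs.1 hs.2))
    (ContinuousOn.intervalIntegrable (by
      rw [Set.uIcc_of_le hT.le]
      exact hμc.mul hσb_cont))
  have hμ0 : μ 0 = 1 := by simp [hμ]
  rw [hftc, h0, hμ0]
end

section
/- Let v₀ > 0, and for each δ > 0 let v_δ : [0,T] → ℝ be the solution of the scattering-free two-photon Riccati equation with initial value δ·v₀ (explicitly, v_δ(s) = μ(s)·(1/(δ·v₀) + ∫₀^{s} μ·σ_b)⁻¹). Then for every s ∈ [0,T], lim_{δ → 0⁺} v_δ(s)/δ = v₀ · μ(s) = v₀ · exp(−∫₀^{s} σ_a(r) dr); that is, in the small-source limit the measurement linearizes and recovers the X-ray transform of σ_a along the line. -/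
/-! Dividing the closed form by `δ` moves `δ` inside the inverse:
`vδ δ s / δ = μ s * (1 / v0 + δ * I)⁻¹` with `I = ∫ t in 0..s, μ t * σb t`. The right-hand side is
continuous at `δ = 0`, since `1 / v0 ≠ 0`, and its value there is `v0 * μ s`. -/

open Set

theorem stmt13
    (T : ℝ) (hT : 0 < T)
    (σa σb : ℝ → ℝ)
    (hσa_cont : ContinuousOn σa (Set.Icc 0 T))
    (hσb_cont : ContinuousOn σb (Set.Icc 0 T))
    (hσa_nonneg : ∀ t ∈ Set.Icc (0 : ℝ) T, 0 ≤ σa t)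
    (hσb_nonneg : ∀ t ∈ Set.Icc (0 : ℝ) T, 0 ≤ σb t)
    (μ : ℝ → ℝ) (hμ : ∀ t, μ t = Real.exp (-∫ r in (0 : ℝ)..t, σa r))
    (v0 : ℝ) (hv0 : 0 < v0)
    (vδ : ℝ → ℝ → ℝ)
    (hvδ : ∀ δ > (0 : ℝ), SolvesRiccati σa σb T (vδ δ) (δ * v0))
    (hvδ_eq : ∀ δ > (0 : ℝ), ∀ s,
      vδ δ s = μ s * (1 / (δ * v0) + ∫ t in (0 : ℝ)..s, μ t * σb t)⁻¹) :
    ∀ s ∈ Set.Icc (0 : ℝ) T,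
      Filter.Tendsto (fun δ : ℝ => vδ δ s / δ) (nhdsWithin 0 (Set.Ioi 0))
        (nhds (v0 * μ s)) ∧
      v0 * μ s = v0 * Real.exp (-∫ r in (0 : ℝ)..s, σa r) := by
  intro s _
  refine ⟨?_, by rw [hμ s]⟩
  set I := ∫ t in (0 : ℝ)..s, μ t * σb t
  have hlim : Filter.Tendsto (fun δ : ℝ => μ s * (1 / v0 + δ * I)⁻¹)
      (nhdsWithin 0 (Set.Ioi 0)) (nhds (v0 * μ s)) := by
    have hcont : ContinuousAt (fun δ : ℝ => μ s * (1 / v0 + δ * I)⁻¹) 0 := by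
      refine continuousAt_const.mul (ContinuousAt.inv₀ (by fun_prop) ?_)
      simpa using hv0.ne'
    have h := hcont.tendsto.mono_left (nhdsWithin_le_nhds (s := Set.Ioi (0 : ℝ)))
    simpa [mul_comm] using h
  refine hlim.congr' ?_
  filter_upwards [self_mem_nhdsWithin] with δ hδ
  have hδ' : (0 : ℝ) < δ := hδ
  have hscale : 1 / v0 + δ * I = δ * (1 / (δ * v0) + I) := by
    field_simp
  rw [hvδ_eq δ hδ' s, hscale, mul_inv]
  ring
end
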